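/- arXiv:2507.08353 — 2 statements merged into one kernel-verified Lean document; each statement's English description precedes it below -/
import Mathlib

section
/- If F is a V3-saturated family of subsets of [n], then there exists an inclusion-minimal element S ∈ F with |S| ≥ n − |F|. -/
open Finset

variable {n : ℕ}

/-- Two sets are incomparable under inclusion. -/
def Incomp (A B : Finset (Fin n)) : Prop := ¬ A ⊆ B ∧ ¬ B ⊆ A

/-- `A, B1, B2, B3` form an induced copy of `V3`: `A` strictly below three
pairwise incomparable sets. -/
def IsV3Copy (A B1 B2 B3 : Finset (Fin n)) : Prop :=
  A ⊂ B1 ∧ A ⊂ B2 ∧ A ⊂ B3 ∧ Incomp B1 B2 ∧ Incomp B1 B3 ∧ Incomp B2 B3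

def V3Free (F : Finset (Finset (Fin n))) : Prop :=
  ¬ ∃ A ∈ F, ∃ B1 ∈ F, ∃ B2 ∈ F, ∃ B3 ∈ F, IsV3Copy A B1 B2 B3

def V3Saturated (F : Finset (Finset (Fin n))) : Prop :=
  V3Free F ∧ ∀ S : Finset (Fin n), S ∉ F → ¬ V3Free (insert S F)

/-- `X` covers `Y` in `F`. -/
def Covers (F : Finset (Finset (Fin n))) (X Y : Finset (Fin n)) : Prop :=
  Y ⊂ X ∧ ∀ Z ∈ F, Y ⊆ Z → Z ⊆ X → Z = Y ∨ Z = X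

/-- `(A,B,C) ∈ Θ_{X,Y}`: the induced order on `{A,B,C,X,Y}` is exactly
`A ⊊ Y ⊊ X`, `A ⊊ B ⊊ X`, `Y ⊊ C`, with `B ∥ Y`, `B ∥ C`, `C ∥ X`. -/
def Theta (X Y A B C : Finset (Fin n)) : Prop :=
  A ⊂ Y ∧ A ⊂ B ∧ Y ⊂ X ∧ B ⊂ X ∧ Y ⊂ C ∧ Incomp B Y ∧ Incomp B C ∧ Incomp C X

/-!
Replace `V3` by the `k`-fork, `k ≥ 2`, and `[n]` by any finite type. Call `j` a direction of `F` if
`P` and `P ∪ {j}` both lie in `F` for some `P ∌ j`. Deleting `j` from all members of `F` merges `P`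
with `P ∪ {j}` and keeps every other direction, so a nonempty family has more members than
directions.

In a saturated family every `j` outside some member `S` is a direction. To see this, take members
`Y ⊂ X` with `j ∈ X \ Y` and `X` minimal. If `Z = X \ {j}` were not a member, adding it would create
a fork in which `Z` is one of the upper sets. Replacing `Z` by `X` cannot give a fork inside `F`, so
another upper set `B` satisfies `B ⊂ X`, and `B` together with the bottom of the fork is a smaller
choice of `X` and `Y`. As the full set is a member, this applies to every member `S` and every
`j ∉ S`.
-/

section Directions

variable {α : Type*} [DecidableEq α] {F : Finset (Finset α)} {i j : α}

/-- `j` is a direction of `F` if the Hasse diagram of the Boolean lattice has an edge in direction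
`j` with both ends in `F`. -/
def IsDirection (F : Finset (Finset α)) (j : α) : Prop :=
  ∃ P ∈ F, j ∉ P ∧ insert j P ∈ F

theorem IsDirection.image_erase (hi : IsDirection F i) (hij : i ≠ j) :
    IsDirection (F.image (·.erase j)) i := by
  obtain ⟨P, hP, hiP, hiPF⟩ := hi
  refine ⟨P.erase j, mem_image_of_mem _ hP, fun h ↦ hiP (mem_of_mem_erase h), ?_⟩
  rw [← erase_insert_of_ne hij]
  exact mem_image_of_mem (·.erase j) hiPF

theorem IsDirection.card_image_erase_lt (hj : IsDirection F j) :
    #(F.image (·.erase j)) < #F := by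
  obtain ⟨P, hP, hjP, hjPF⟩ := hj
  refine card_image_le.lt_of_ne fun hcard ↦ ?_
  have merged : P = insert j P :=
    card_image_iff.mp hcard hP hjPF (by simp [erase_eq_of_notMem hjP])
  exact insert_ne_self.mpr hjP merged.symm

theorem card_lt_card_of_forall_isDirection {D : Finset α} (hF : F.Nonempty)
    (hD : ∀ j ∈ D, IsDirection F j) : #D < #F := by
  induction D using Finset.induction_on generalizing F with
  | empty => simpa using hF.card_pos
  | insert j D hj ih =>
    have hlt : #D < #(F.image (·.erase j)) :=
      ih (hF.image _) fun i hi ↦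
        (hD i (mem_insert_of_mem hi)).image_erase (ne_of_mem_of_not_mem hi hj)
    have hmerge := (hD j (mem_insert_self j D)).card_image_erase_lt
    rw [card_insert_of_notMem hj]
    omega

end Directions

section Forks

variable {α : Type*} {k : ℕ} {F 𝒜 : Finset (Finset α)} {A S X Y Z : Finset α} {j : α}

/-- `A` and `𝒜` form an induced copy of the `k`-fork: the set `A` lies strictly below the `k`
pairwise incomparable members of `𝒜`. -/
structure IsFork (k : ℕ) (A : Finset α) (𝒜 : Finset (Finset α)) : Prop where
  ssubset : ∀ B ∈ 𝒜, A ⊂ B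
  antichain : IsAntichain (· ⊆ ·) (𝒜 : Set (Finset α))
  card_eq : #𝒜 = k

/-- `F` contains no induced copy of the `k`-fork. -/
def IsForkFree (k : ℕ) (F : Finset (Finset α)) : Prop :=
  ∀ A ∈ F, ∀ 𝒜 ⊆ F, ¬ IsFork k A 𝒜

/-- `F` is saturated for the `k`-fork: it contains no induced copy, and adding any further set
creates one. -/
structure IsForkSaturated [DecidableEq α] (k : ℕ) (F : Finset (Finset α)) : Prop where
  isForkFree : IsForkFree k F
  not_isForkFree_insert : ∀ S ∉ F, ¬ IsForkFree k (insert S F)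

theorem IsFork.mono_left (h : IsFork k A 𝒜) (hYA : Y ⊆ A) : IsFork k Y 𝒜 :=
  ⟨fun B hB ↦ hYA.trans_ssubset (h.ssubset B hB), h.antichain, h.card_eq⟩

variable [DecidableEq α]

theorem IsFork.insert_erase (h : IsFork k A 𝒜) (hZ : Z ∈ 𝒜) (hZX : Z ⊆ X)
    (hX : ∀ B ∈ 𝒜.erase Z, ¬ B ⊆ X) : IsFork k A (insert X (𝒜.erase Z)) where
  ssubset := forall_mem_insert _ _ _ |>.mpr
    ⟨(h.ssubset Z hZ).trans_subset hZX, fun B hB ↦ h.ssubset B (mem_of_mem_erase hB)⟩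
  antichain := by
    have hZB : ∀ B ∈ 𝒜.erase Z, ¬ Z ⊆ B := fun B hB ↦
      h.antichain hZ (mem_of_mem_erase hB) (ne_of_mem_erase hB).symm
    rw [coe_insert]
    exact (h.antichain.subset (coe_subset.mpr (erase_subset Z 𝒜))).insert
      (fun B hB _ ↦ hX B hB) fun B hB _ hXB ↦ hZB B hB (hZX.trans hXB)
  card_eq := by
    have hX𝒜 : X ∉ 𝒜.erase Z := fun hmem ↦ hX X hmem subset_rfl
    rw [card_insert_of_notMem hX𝒜, card_erase_add_one hZ, h.card_eq]

namespace IsForkSaturated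

theorem exists_isFork (hF : IsForkSaturated k F) (hS : S ∉ F) :
    ∃ A ∈ insert S F, ∃ 𝒜 ⊆ insert S F, IsFork k A 𝒜 := by
  by_contra! hfree
  exact hF.not_isForkFree_insert S hS hfree

theorem exists_isFork_of_ssubset (hF : IsForkSaturated k F) (hY : Y ∈ F) (hZ : Z ∉ F)
    (hYZ : Y ⊂ Z) : ∃ A ∈ F, ∃ 𝒜, Z ∈ 𝒜 ∧ 𝒜.erase Z ⊆ F ∧ IsFork k A 𝒜 := by
  obtain ⟨A, hA, 𝒜, h𝒜, hfork⟩ := hF.exists_isFork hZ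
  have hAF : A ∈ F := by
    refine mem_of_mem_insert_of_ne hA ?_
    rintro rfl
    have hA𝒜 : A ∉ 𝒜 := fun h ↦ ssubset_irrefl A (hfork.ssubset A h)
    exact hF.isForkFree Y hY 𝒜 ((subset_insert_iff_of_notMem hA𝒜).mp h𝒜)
      (hfork.mono_left hYZ.subset)
  have hZ𝒜 : Z ∈ 𝒜 := by
    by_contra hZ𝒜
    exact hF.isForkFree A hAF 𝒜 ((subset_insert_iff_of_notMem hZ𝒜).mp h𝒜) hfork
  exact ⟨A, hAF, 𝒜, hZ𝒜, subset_insert_iff.mp h𝒜, hfork⟩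

theorem exists_ssubset_of_erase_notMem (hF : IsForkSaturated k F) (hX : X ∈ F) (hY : Y ∈ F)
    (hYX : Y ⊆ X) (hjY : j ∉ Y) (hXj : X.erase j ∉ F) :
    ∃ A ∈ F, ∃ B ∈ F, A ⊂ B ∧ B ⊂ X ∧ j ∉ A ∧ j ∈ B := by
  have hYXj : Y ⊂ X.erase j :=
    (subset_erase.mpr ⟨hYX, hjY⟩).ssubset_of_ne (ne_of_mem_of_not_mem hY hXj)
  obtain ⟨A, hA, 𝒜, hXj𝒜, h𝒜, hfork⟩ := hF.exists_isFork_of_ssubset hY hXj hYXj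
  obtain ⟨B, hB, hBX⟩ : ∃ B ∈ 𝒜.erase (X.erase j), B ⊆ X := by
    by_contra! hX𝒜
    exact hF.isForkFree A hA _ (insert_subset hX h𝒜)
      (hfork.insert_erase hXj𝒜 (erase_subset j X) hX𝒜)
  have hB𝒜 : B ∈ 𝒜 := mem_of_mem_erase hB
  have hjB : j ∈ B := by
    by_contra hjB
    exact hfork.antichain hB𝒜 hXj𝒜 (ne_of_mem_erase hB) (subset_erase.mpr ⟨hBX, hjB⟩)
  have hBX' : B ≠ X := by
    rintro rfl
    exact hfork.antichain hXj𝒜 hB𝒜 (ne_of_mem_erase hB).symm (erase_subset j B)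
  exact ⟨A, hA, B, h𝒜 hB, hfork.ssubset B hB𝒜, hBX.ssubset_of_ne hBX',
    fun hjA ↦ notMem_erase j X ((hfork.ssubset _ hXj𝒜).subset hjA), hjB⟩

theorem isDirection (hF : IsForkSaturated k F) (hX : X ∈ F) (hY : Y ∈ F) (hYX : Y ⊆ X)
    (hjX : j ∈ X) (hjY : j ∉ Y) : IsDirection F j := by
  induction X using Finset.strongInduction generalizing Y with
  | H X ih =>
    by_cases hXj : X.erase j ∈ F
    · exact ⟨X.erase j, hXj, notMem_erase j X, by rwa [insert_erase hjX]⟩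
    · obtain ⟨A, hA, B, hB, hAB, hBX, hjA, hjB⟩ :=
        hF.exists_ssubset_of_erase_notMem hX hY hYX hjY hXj
      exact ih B hBX hB hA hAB.subset hjB hjA

theorem univ_mem [Fintype α] (hF : IsForkSaturated k F) (hk : 2 ≤ k) : univ ∈ F := by
  by_contra huniv
  obtain ⟨A, hA, 𝒜, h𝒜, hfork⟩ := hF.exists_isFork huniv
  have hcard : 1 < #𝒜 := by rw [hfork.card_eq]; omega
  have huniv𝒜 : univ ∉ 𝒜 := fun h ↦ by
    obtain ⟨B, hB, hBuniv⟩ := exists_mem_ne hcard univ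
    exact hfork.antichain hB h hBuniv (subset_univ B)
  have hA_ne : A ≠ univ := by
    obtain ⟨B, hB⟩ := card_pos.mp (zero_lt_one.trans hcard)
    exact ((hfork.ssubset B hB).trans_subset (subset_univ B)).ne
  exact hF.isForkFree A (mem_of_mem_insert_of_ne hA hA_ne) 𝒜
    ((subset_insert_iff_of_notMem huniv𝒜).mp h𝒜) hfork

end IsForkSaturated

theorem stmt_8_general [Fintype α] (hk : 2 ≤ k) (hF : IsForkSaturated k F) (hS : S ∈ F) :
    Fintype.card α < #F + #S := by
  have hcompl : #Sᶜ < #F := card_lt_card_of_forall_isDirection ⟨S, hS⟩ fun j hj ↦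
    hF.isDirection (hF.univ_mem hk) hS (subset_univ S) (mem_univ j) (mem_compl.mp hj)
  have := card_compl_add_card S
  omega

end Forks

theorem isV3Copy_iff_isFork {A B₁ B₂ B₃ : Finset (Fin n)} :
    IsV3Copy A B₁ B₂ B₃ ↔ IsFork 3 A {B₁, B₂, B₃} := by
  constructor
  · rintro ⟨h₁, h₂, h₃, h₁₂, h₁₃, h₂₃⟩
    have ne_of_incomp {B C : Finset (Fin n)} (h : Incomp B C) : B ≠ C := fun hBC ↦ h.1 hBC.subset
    refine ⟨by simp [h₁, h₂, h₃], ?_, card_eq_three.mpr ⟨B₁, B₂, B₃,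
      ne_of_incomp h₁₂, ne_of_incomp h₁₃, ne_of_incomp h₂₃, rfl⟩⟩
    simp [isAntichain_insert, h₁₂.1, h₁₂.2, h₁₃.1, h₁₃.2, h₂₃.1, h₂₃.2]
  · rintro ⟨hA, hanti, hcard⟩
    obtain ⟨h₁₂, h₁₃, h₂₃⟩ : B₁ ≠ B₂ ∧ B₁ ≠ B₃ ∧ B₂ ≠ B₃ := by grind
    have incomp_of_ne {B C : Finset (Fin n)} (hB : B ∈ ({B₁, B₂, B₃} : Finset _))
        (hC : C ∈ ({B₁, B₂, B₃} : Finset _)) (h : B ≠ C) : Incomp B C :=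
      ⟨hanti hB hC h, hanti hC hB h.symm⟩
    exact ⟨hA _ (by simp), hA _ (by simp), hA _ (by simp), incomp_of_ne (by simp) (by simp) h₁₂,
      incomp_of_ne (by simp) (by simp) h₁₃, incomp_of_ne (by simp) (by simp) h₂₃⟩

theorem isForkFree_three_iff {F : Finset (Finset (Fin n))} : IsForkFree 3 F ↔ V3Free F := by
  constructor
  · rintro hF ⟨A, hA, B₁, h₁, B₂, h₂, B₃, h₃, hcopy⟩
    exact hF A hA {B₁, B₂, B₃} (by simp [insert_subset_iff, h₁, h₂, h₃])
      (isV3Copy_iff_isFork.mp hcopy)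
  · intro hF A hA 𝒜 h𝒜 hfork
    obtain ⟨B₁, B₂, B₃, -, -, -, rfl⟩ := card_eq_three.mp hfork.card_eq
    exact hF ⟨A, hA, B₁, h𝒜 (by simp), B₂, h𝒜 (by simp), B₃, h𝒜 (by simp),
      isV3Copy_iff_isFork.mpr hfork⟩

theorem V3Saturated.isForkSaturated {F : Finset (Finset (Fin n))} (hF : V3Saturated F) :
    IsForkSaturated 3 F :=
  ⟨isForkFree_three_iff.mpr hF.1, fun S hS ↦ isForkFree_three_iff.not.mpr (hF.2 S hS)⟩

theorem stmt_8 (n : ℕ) (F : Finset (Finset (Fin n))) (hF : V3Saturated F) :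
    ∃ S ∈ F, (∀ T ∈ F, ¬ T ⊂ S) ∧ n - F.card ≤ S.card := by
  have hsat : IsForkSaturated 3 F := hF.isForkSaturated
  obtain ⟨S, hS⟩ := F.exists_minimal ⟨univ, hsat.univ_mem (by norm_num)⟩
  have hcard : n < #F + #S := by simpa using stmt_8_general (by norm_num) hsat hS.prop
  exact ⟨S, hS.prop, fun T hT ↦ hS.not_lt hT, by omega⟩
end

section
/- Every V3-saturated family F of subsets of [n] satisfies |F| ≥ n/2. In particular, sat*(n, V3) ≥ n/2. -/
open Finset

variable {n : ℕ}

/-!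
Fix a minimal member `M` of `F`; a `V3`-free family has no three pairwise incomparable members
above `M`. Split `F` into the maximal members of `{X ∈ F | ¬ M ⊆ X}` and the rest.

For `k ∈ M`, saturation at `M.erase k` yields a member of the first part missing exactly `k`
from `M`, so the first part has at least `|M|` members. For `i ∉ M`, let `Y ⊇ M` be a maximal member
avoiding `i`; either `A = insert i Y` or saturation at `insert i Y` yields a member `A` of the
second part with `i ∈ A ⊆ insert i Y`. Distinct points sharing the same `A` have incomparable `Y`s
above `M`, so each `A` serves at most two points and the second part has at least `(n - |M|) / 2`
members.
-/

section

variable {F : Finset (Finset (Fin n))} {M S Y : Finset (Fin n)} {i k : Fin n}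

theorem Incomp.symm {A B : Finset (Fin n)} (h : Incomp A B) : Incomp B A := ⟨h.2, h.1⟩

theorem Incomp.ne {A B : Finset (Fin n)} (h : Incomp A B) : A ≠ B :=
  fun hAB => h.1 hAB.subset

namespace V3Free

theorem not_pairwise_incomp_of_subset (hF : V3Free F) {B C D : Finset (Fin n)}
    (hM : M ∈ F) (hB : B ∈ F) (hC : C ∈ F) (hD : D ∈ F) (hMB : M ⊆ B) (hMC : M ⊆ C) (hMD : M ⊆ D) :
    ¬ (Incomp B C ∧ Incomp B D ∧ Incomp C D) := by
  rintro ⟨hBC, hBD, hCD⟩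
  have ssubset_of_incomp {X Z : Finset (Fin n)} (hMX : M ⊆ X) (hMZ : M ⊆ Z) (hXZ : Incomp X Z) :
      M ⊂ X :=
    ⟨hMX, fun hXM => hXZ.1 (hXM.trans hMZ)⟩
  exact hF ⟨M, hM, B, hB, C, hC, D, hD, ssubset_of_incomp hMB hMC hBC,
    ssubset_of_incomp hMC hMD hCD, ssubset_of_incomp hMD hMB hBD.symm, hBC, hBD, hCD⟩

theorem exists_isV3Copy_of_not_v3Free_insert (hF : V3Free F) (hS : ¬ V3Free (insert S F)) :
    (∃ B ∈ F, ∃ C ∈ F, ∃ D ∈ F, IsV3Copy S B C D) ∨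
      ∃ A ∈ F, ∃ B ∈ F, ∃ C ∈ F, IsV3Copy A S B C := by
  obtain ⟨A, hA, B, hB, C, hC, D, hD, hAB, hAC, hAD, hBC, hBD, hCD⟩ := not_not.1 hS
  have mem_of_ne {X : Finset (Fin n)} (hX : X ∈ insert S F) (hne : X ≠ S) : X ∈ F :=
    mem_of_mem_insert_of_ne hX hne
  obtain rfl | hAS := eq_or_ne A S
  · exact .inl ⟨B, mem_of_ne hB hAB.ne', C, mem_of_ne hC hAC.ne', D, mem_of_ne hD hAD.ne',
      hAB, hAC, hAD, hBC, hBD, hCD⟩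
  refine .inr ⟨A, mem_of_ne hA hAS, ?_⟩
  obtain rfl | hBS := eq_or_ne B S
  · exact ⟨C, mem_of_ne hC hBC.ne.symm, D, mem_of_ne hD hBD.ne.symm,
      hAB, hAC, hAD, hBC, hBD, hCD⟩
  obtain rfl | hCS := eq_or_ne C S
  · exact ⟨B, mem_of_ne hB hBS, D, mem_of_ne hD hCD.ne.symm,
      hAC, hAB, hAD, hBC.symm, hCD, hBD⟩
  obtain rfl | hDS := eq_or_ne D S
  · exact ⟨B, mem_of_ne hB hBS, C, mem_of_ne hC hCS,
      hAD, hAB, hAC, hBD.symm, hCD.symm, hBC⟩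
  exact (hF ⟨A, mem_of_ne hA hAS, B, mem_of_ne hB hBS, C, mem_of_ne hC hCS, D, mem_of_ne hD hDS,
    hAB, hAC, hAD, hBC, hBD, hCD⟩).elim

end V3Free

namespace V3Saturated

theorem exists_isV3Copy (hF : V3Saturated F) (hS : S ∉ F) :
    (∃ B ∈ F, ∃ C ∈ F, ∃ D ∈ F, IsV3Copy S B C D) ∨
      ∃ A ∈ F, ∃ B ∈ F, ∃ C ∈ F, IsV3Copy A S B C :=
  hF.1.exists_isV3Copy_of_not_v3Free_insert (hF.2 S hS)

theorem nonempty (hF : V3Saturated F) : F.Nonempty := by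
  by_cases hempty : ∅ ∈ F
  · exact ⟨∅, hempty⟩
  · obtain ⟨B, hB, -⟩ | ⟨A, hA, -⟩ := hF.exists_isV3Copy hempty
    exacts [⟨B, hB⟩, ⟨A, hA⟩]

end V3Saturated

open Classical in
/-- The maximal elements of `{X ∈ F | ¬ M ⊆ X}`, the part of `F` that accounts for the points
of `M`. -/
noncomputable def maximalNotAbove (F : Finset (Finset (Fin n))) (M : Finset (Fin n)) :
    Finset (Finset (Fin n)) :=
  {A ∈ F | Maximal (fun X => X ∈ F ∧ ¬ M ⊆ X) A}

theorem mem_maximalNotAbove {A : Finset (Fin n)} :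
    A ∈ maximalNotAbove F M ↔ Maximal (fun X => X ∈ F ∧ ¬ M ⊆ X) A := by
  classical
  rw [maximalNotAbove, mem_filter, and_iff_right_iff_imp]
  exact fun hA => hA.prop.1

theorem maximalNotAbove_subset : maximalNotAbove F M ⊆ F :=
  fun _ hA => (mem_maximalNotAbove.1 hA).prop.1

theorem subset_of_mem_maximalNotAbove_of_ssubset {A X : Finset (Fin n)}
    (hA : A ∈ maximalNotAbove F M) (hX : X ∈ F) (hAX : A ⊂ X) : M ⊆ X := by
  by_contra hMX
  exact (mem_maximalNotAbove.1 hA).not_prop_of_gt hAX ⟨hX, hMX⟩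

namespace V3Saturated

theorem exists_mem_erase_subset_notMem (hF : V3Saturated F) (hM : Minimal (· ∈ F) M)
    (hk : k ∈ M) : ∃ B ∈ F, M.erase k ⊆ B ∧ k ∉ B := by
  have herase : M.erase k ∉ F := hM.not_prop_of_lt (erase_ssubset hk)
  obtain ⟨B, hB, C, hC, D, hD, hMB, hMC, hMD, hincomp⟩ | ⟨A, hA, _, _, _, _, hAM, -⟩ :=
    hF.exists_isV3Copy herase
  · by_contra! hmem
    have subset_of_erase_subset {X : Finset (Fin n)} (hX : X ∈ F) (hMX : M.erase k ⊆ X) : M ⊆ X :=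
      insert_erase hk ▸ insert_subset (hmem X hX hMX) hMX
    exact hF.1.not_pairwise_incomp_of_subset hM.prop hB hC hD (subset_of_erase_subset hB hMB.subset)
      (subset_of_erase_subset hC hMC.subset) (subset_of_erase_subset hD hMD.subset) hincomp
  · exact (hM.not_prop_of_lt (hAM.trans (erase_ssubset hk)) hA).elim

theorem exists_mem_maximalNotAbove_sdiff_eq_singleton (hF : V3Saturated F) (hM : Minimal (· ∈ F) M)
    (hk : k ∈ M) : ∃ A ∈ maximalNotAbove F M, M \ A = {k} := by
  obtain ⟨B, hB, hMB, hkB⟩ := hF.exists_mem_erase_subset_notMem hM hk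
  obtain ⟨A, hBA, hA⟩ := Finite.exists_le_maximal (p := fun X => X ∈ F ∧ ¬ M ⊆ X)
    ⟨hB, fun hMB' => hkB (hMB' hk)⟩
  have hMA : M.erase k ⊆ A := hMB.trans hBA
  have hkA : k ∉ A := fun hkA => hA.prop.2 (insert_erase hk ▸ insert_subset hkA hMA)
  refine ⟨A, mem_maximalNotAbove.2 hA, ?_⟩
  rw [← insert_erase hk, insert_sdiff_of_notMem _ hkA, sdiff_eq_empty_iff_subset.2 hMA,
    insert_empty_eq]

theorem card_le_card_maximalNotAbove (hF : V3Saturated F) (hM : Minimal (· ∈ F) M) :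
    #M ≤ #(maximalNotAbove F M) := by
  refine card_le_card_of_forall_subsingleton (fun k A => M \ A = {k})
    (fun k hk => hF.exists_mem_maximalNotAbove_sdiff_eq_singleton hM hk) ?_
  rintro A - k ⟨-, hk⟩ l ⟨-, hl⟩
  exact singleton_injective (hk.symm.trans hl)

theorem exists_ssubset_insert_of_maximal_notMem (hF : V3Saturated F)
    (hY : Maximal (fun Z => Z ∈ F ∧ i ∉ Z) Y) (hS : insert i Y ∉ F) :
    ∃ A ∈ F, ∃ B ∈ F, ∃ C ∈ F, A ⊂ insert i Y ∧ A ⊂ B ∧ A ⊂ C ∧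
      Incomp Y B ∧ Incomp Y C ∧ Incomp B C := by
  have hYS : Y ⊆ insert i Y := subset_insert i Y
  obtain ⟨B, hB, C, hC, D, hD, hSB, hSC, hSD, hincomp⟩ |
    ⟨A, hA, B, hB, C, hC, hAS, hAB, hAC, hSB, hSC, hBC⟩ := hF.exists_isV3Copy hS
  · exact (hF.1.not_pairwise_incomp_of_subset hY.prop.1 hB hC hD (hYS.trans hSB.subset)
      (hYS.trans hSC.subset) (hYS.trans hSD.subset) hincomp).elim
  have incomp_of_insert {X : Finset (Fin n)} (hX : X ∈ F) (hSX : Incomp (insert i Y) X) :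
      Incomp Y X := by
    have hXY : ¬ X ⊆ Y := fun hXY => hSX.2 (hXY.trans hYS)
    refine ⟨fun hYX => ?_, hXY⟩
    have hiX : i ∈ X := by
      by_contra hiX
      exact hY.not_prop_of_gt ⟨hYX, hXY⟩ ⟨hX, hiX⟩
    exact hSX.1 (insert_subset hiX hYX)
  exact ⟨A, hA, B, hB, C, hC, hAS, hAB, hAC, incomp_of_insert hB hSB, incomp_of_insert hC hSC, hBC⟩

end V3Saturated

/-- `A` witnesses the point `i` over `M` if `A` contains `i` and `A.erase i` lies below a maximal
member `Y ⊇ M` of `F` avoiding `i`. Used to charge the points outside `M` to members of `F`. -/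
def Witnesses (F : Finset (Finset (Fin n))) (M A : Finset (Fin n)) (i : Fin n) : Prop :=
  i ∈ A ∧ ∃ Y, Maximal (fun Z => Z ∈ F ∧ i ∉ Z) Y ∧ M ⊆ Y ∧ A ⊆ insert i Y

theorem V3Saturated.exists_witnesses (hF : V3Saturated F) (hM : M ∈ F) (hi : i ∉ M) :
    ∃ A ∈ F \ maximalNotAbove F M, Witnesses F M A i := by
  obtain ⟨Y, hMY, hY⟩ := Finite.exists_le_maximal (p := fun Z => Z ∈ F ∧ i ∉ Z) ⟨hM, hi⟩
  by_cases hS : insert i Y ∈ F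
  · refine ⟨insert i Y, mem_sdiff.2 ⟨hS, fun hmax => ?_⟩, mem_insert_self i Y,
      Y, hY, hMY, Subset.rfl⟩
    exact (mem_maximalNotAbove.1 hmax).prop.2 (hMY.trans (subset_insert i Y))
  obtain ⟨A, hA, B, hB, C, hC, hAS, hAB, hAC, hincomp⟩ :=
    hF.exists_ssubset_insert_of_maximal_notMem hY hS
  have hiA : i ∈ A := by
    by_contra hiA
    exact hF.1.not_pairwise_incomp_of_subset hA hY.prop.1 hB hC
      ((subset_insert_iff_of_notMem hiA).1 hAS.subset) hAB.subset hAC.subset hincomp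
  have hA_notMem : A ∉ maximalNotAbove F M := fun hmax =>
    hF.1.not_pairwise_incomp_of_subset hM hY.prop.1 hB hC hMY
      (subset_of_mem_maximalNotAbove_of_ssubset hmax hB hAB)
      (subset_of_mem_maximalNotAbove_of_ssubset hmax hC hAC) hincomp
  exact ⟨A, mem_sdiff.2 ⟨hA, hA_notMem⟩, hiA, Y, hY, hMY, hAS.subset⟩

theorem V3Free.card_le_two_of_witnesses (hF : V3Free F) (hM : M ∈ F) {A I : Finset (Fin n)}
    (hI : ∀ i ∈ I, Witnesses F M A i) : #I ≤ 2 := by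
  choose hmem Y hmax hMY hAY using hI
  have not_subset {i j : Fin n} (hi : i ∈ I) (hj : j ∈ I) (hij : i ≠ j) : ¬ Y i hi ⊆ Y j hj := by
    have hjY : j ∈ Y i hi := mem_of_mem_insert_of_ne (hAY i hi (hmem j hj)) hij.symm
    exact fun hsub => (hmax j hj).prop.2 (hsub hjY)
  have incomp {i j : Fin n} (hi : i ∈ I) (hj : j ∈ I) (hij : i ≠ j) : Incomp (Y i hi) (Y j hj) :=
    ⟨not_subset hi hj hij, not_subset hj hi hij.symm⟩
  by_contra! hcard
  obtain ⟨i, j, l, hi, hj, hl, hij, hil, hjl⟩ := two_lt_card_iff.1 hcard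
  exact hF.not_pairwise_incomp_of_subset hM (hmax i hi).prop.1 (hmax j hj).prop.1 (hmax l hl).prop.1
    (hMY i hi) (hMY j hj) (hMY l hl) ⟨incomp hi hj hij, incomp hi hl hil, incomp hj hl hjl⟩

theorem V3Saturated.card_compl_le_card_sdiff_maximalNotAbove_mul_two (hF : V3Saturated F)
    (hM : M ∈ F) : #Mᶜ ≤ #(F \ maximalNotAbove F M) * 2 := by
  classical
  rw [← mul_one #Mᶜ]
  refine card_mul_le_card_mul (fun i A => Witnesses F M A i) (fun i hi => ?_) (fun A _ => ?_)
  · obtain ⟨A, hA, hAi⟩ := hF.exists_witnesses hM (mem_compl.1 hi)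
    exact card_pos.2 ⟨A, (mem_bipartiteAbove _).2 ⟨hA, hAi⟩⟩
  · exact hF.1.card_le_two_of_witnesses hM fun i hi => ((mem_bipartiteBelow _).1 hi).2

end

theorem stmt_10 (n : ℕ) (F : Finset (Finset (Fin n))) (hF : V3Saturated F) :
    (n : ℝ) / 2 ≤ F.card := by
  obtain ⟨M, hM⟩ := F.exists_minimal hF.nonempty
  have hinside : #M ≤ #(maximalNotAbove F M) := hF.card_le_card_maximalNotAbove hM
  have houtside : #Mᶜ ≤ #(F \ maximalNotAbove F M) * 2 :=
    hF.card_compl_le_card_sdiff_maximalNotAbove_mul_two hM.prop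
  have hpoints : #M + #Mᶜ = n := by rw [card_add_card_compl, Fintype.card_fin]
  have hmembers : #(F \ maximalNotAbove F M) + #(maximalNotAbove F M) = #F :=
    card_sdiff_add_card_eq_card maximalNotAbove_subset
  have hcard : n ≤ #F * 2 := by lia
  rw [div_le_iff₀ two_pos]
  exact_mod_cast hcard
end
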